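/- Let u : N → ℝ be a Lipschitz function with Lipschitz constant κ and H : T*N → ℝ continuous, convex in p. Then u is a viscosity subsolution of H(x, d_x u) = c if and only if ∂⁺u(x,v) ≤ L(x,v) + c for every (x,v) ∈ TN, where L is the Fenchel conjugate of H and ∂⁺u is the Clarke upper gauge. -/

import Mathlib

open Filter Topology

def reachableGrad {n : ℕ} (u : EuclideanSpace ℝ (Fin n) → ℝ)
    (x : EuclideanSpace ℝ (Fin n)) : Set (EuclideanSpace ℝ (Fin n) →L[ℝ] ℝ) :=
  {p | ∃ xs : ℕ → EuclideanSpace ℝ (Fin n),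
        (∀ m, DifferentiableAt ℝ u (xs m)) ∧
        Tendsto xs atTop (𝓝 x) ∧
        Tendsto (fun m => fderiv ℝ u (xs m)) atTop (𝓝 p)}

/-- The Clarke generalized gradient: the closed convex hull of the reachable gradients. -/
def clarkeGrad {n : ℕ} (u : EuclideanSpace ℝ (Fin n) → ℝ)
    (x : EuclideanSpace ℝ (Fin n)) : Set (EuclideanSpace ℝ (Fin n) →L[ℝ] ℝ) :=
  closure (convexHull ℝ (reachableGrad u x))

/-- The upper Clarke gauge `∂⁺u(x,v) = max{p(v) : p ∈ ∂ᶜu(x)}`. -/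
noncomputable def clarkeUpper {n : ℕ} (u : EuclideanSpace ℝ (Fin n) → ℝ)
    (x v : EuclideanSpace ℝ (Fin n)) : ℝ :=
  sSup ((fun p : EuclideanSpace ℝ (Fin n) →L[ℝ] ℝ => p v) '' clarkeGrad u x)

open MeasureTheory Metric Set

section Convex

variable {E : Type*} [NormedAddCommGroup E] [InnerProductSpace ℝ E] [CompleteSpace E]

/-- Reflexivity of a Hilbert space: functionals on the dual are evaluations. -/
theorem exists_forall_apply_eq_eval (l : (E →L[ℝ] ℝ) →L[ℝ] ℝ) :
    ∃ v : E, ∀ q : E →L[ℝ] ℝ, l q = q v := by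
  let T : E →L[ℝ] (E →L[ℝ] ℝ) := innerSL ℝ
  refine ⟨(InnerProductSpace.toDual ℝ E).symm (l.comp T), fun q => ?_⟩
  obtain ⟨w, rfl⟩ := (InnerProductSpace.toDual ℝ E).surjective q
  rw [InnerProductSpace.toDual_apply_apply, real_inner_comm,
    InnerProductSpace.toDual_symm_apply]
  rfl

/-- One half of the Fenchel–Moreau theorem: a continuous convex function on the dual is bounded
by any bound on the differences `p v - h*(v)`, where `h*` is its Fenchel conjugate. -/
theorem ConvexOn.le_of_forall_sub_conjugate_le {h : (E →L[ℝ] ℝ) → ℝ}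
    (hconv : ConvexOn ℝ univ h) (hcont : Continuous h) {L : E → ℝ}
    (hL : ∀ v, IsLUB {r : ℝ | ∃ p : E →L[ℝ] ℝ, r = p v - h p} (L v))
    {p : E →L[ℝ] ℝ} {c : ℝ} (hp : ∀ v, p v ≤ L v + c) : h p ≤ c := by
  refine le_of_forall_lt fun a ha => ?_
  obtain ⟨b, hab, hb⟩ := exists_between ha
  obtain ⟨l, d, hle, heq⟩ := hconv.exists_affine_le_of_lt (𝕜 := ℝ) (mem_univ p) hb isClosed_univ
    (hcont.lowerSemicontinuous.lowerSemicontinuousOn _)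
  obtain ⟨v, hv⟩ := exists_forall_apply_eq_eval l
  have hLv : L v ≤ -d := by
    refine (hL v).2 ?_
    rintro r ⟨q, rfl⟩
    have := hle ⟨q, mem_univ q⟩
    simp only [Pi.add_apply, domRestrict_apply, Function.comp_apply, RCLike.re_to_real,
      Function.const_apply, hv] at this
    linarith
  simp only [RCLike.re_to_real, hv] at heq
  linarith [hp v]

end Convex

section Viscosity

variable {E : Type*} [NormedAddCommGroup E] [InnerProductSpace ℝ E] [FiniteDimensional ℝ E]

/-- A continuous viscosity subsolution satisfies the inequality classically wherever it is
differentiable. -/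
theorem DifferentiableAt.le_of_viscosity_subsolution {H : E → (E →L[ℝ] ℝ) → ℝ}
    (hcont : Continuous (Function.uncurry H)) {c : ℝ} {u : E → ℝ} (hu : Continuous u)
    (hvisc : ∀ x (φ : E → ℝ), ContDiff ℝ 1 φ →
      IsLocalMax (fun y => u y - φ y) x → H x (fderiv ℝ φ x) ≤ c)
    {y : E} (hy : DifferentiableAt ℝ u y) : H y (fderiv ℝ u y) ≤ c := by
  set p := fderiv ℝ u y
  by_contra! hlt
  have hev : ∀ᶠ w in 𝓝 (y, p), c < Function.uncurry H w :=
    hcont.continuousAt.eventually (lt_mem_nhds hlt)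
  obtain ⟨δ, hδ, hball⟩ := Metric.eventually_nhds_iff.1 hev
  obtain ⟨r₀, hr₀, hdiff⟩ := Metric.eventually_nhds_iff.1
    (hy.hasFDerivAt.isLittleO.def (show (0 : ℝ) < δ / 8 by positivity))
  obtain ⟨r, hr, hrlt⟩ := exists_between (lt_min hr₀ hδ)
  set A : ℝ := 2 * (δ / 8) / r with hA
  have hA0 : 0 < A := by positivity
  have hAr : A * r = δ / 4 := by rw [hA]; field_simp; norm_num
  let φ : E → ℝ := fun z => p (z - y) + A * ‖z - y‖ ^ 2
  have hφ : ContDiff ℝ 1 φ := by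
    have : ContDiff ℝ 1 fun z : E => ‖z - y‖ ^ 2 := (contDiff_id.sub contDiff_const).norm_sq ℝ
    fun_prop
  obtain ⟨z, hz, hmax⟩ := (isCompact_closedBall y r).exists_isMaxOn
    ⟨y, mem_closedBall_self hr.le⟩ (hu.sub hφ.continuous).continuousOn
  have hzr : ‖z - y‖ ≤ r := by simpa [dist_eq_norm] using hz
  have hzy : u y ≤ u z - φ z := by
    simpa [φ] using hmax (mem_closedBall_self hr.le : y ∈ closedBall y r)
  have hlin : u z - u y - p (z - y) ≤ δ / 8 * ‖z - y‖ :=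
    (le_abs_self _).trans (hdiff ((mem_closedBall.1 hz).trans_lt (hrlt.trans_le (min_le_left _ _))))
  have hzlt : ‖z - y‖ < r := by
    refine lt_of_le_of_ne hzr fun heq => ?_
    simp only [φ, heq] at hzy
    rw [heq] at hlin
    nlinarith
  have hloc : IsLocalMax (fun x => u x - φ x) z :=
    hmax.isLocalMax (closedBall_mem_nhds_of_mem (by simpa [dist_eq_norm] using hzlt))
  have hderiv : HasFDerivAt φ (p + A • (2 • (innerSL ℝ (z - y)))) z := by
    have h1 : HasFDerivAt (fun x : E => x - y) (ContinuousLinearMap.id ℝ E) z :=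
      (hasFDerivAt_id z).sub_const y
    exact ((p.hasFDerivAt.comp z h1).add (h1.norm_sq.const_mul A))
  have hH := hvisc z φ hφ hloc
  rw [hderiv.fderiv] at hH
  refine absurd hH (not_le.2 (hball (y := (z, p + A • (2 • (innerSL ℝ (z - y))))) ?_))
  rw [Prod.dist_eq, max_lt_iff]
  refine ⟨(mem_closedBall.1 hz).trans_lt (hrlt.trans_le (min_le_right _ _)), ?_⟩
  have hn : ‖A • (2 • (innerSL ℝ (z - y)))‖ = 2 * (A * ‖z - y‖) := by
    rw [norm_smul, ← Nat.cast_smul_eq_nsmul ℝ, norm_smul, innerSL_apply_norm]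
    rw [Real.norm_of_nonneg hA0.le]
    simp only [Nat.cast_ofNat, Real.norm_ofNat]
    ring
  simp only [dist_eq_norm, add_sub_cancel_left]
  rw [hn]
  nlinarith

end Viscosity

section Lipschitz

variable {E : Type*} [NormedAddCommGroup E] [NormedSpace ℝ E] [FiniteDimensional ℝ E]

/-- If the derivative of a Lipschitz function in direction `v` is at most `a` at every point of
differentiability of an open convex set, then so is its slope along segments in direction `v`. -/
theorem LipschitzWith.sub_le_mul_of_forall_fderiv_le {u : E → ℝ} {K : NNReal}
    (hu : LipschitzWith K u) {s : Set E} (hs : Convex ℝ s) (hso : IsOpen s) {v : E} {a : ℝ}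
    (ha : ∀ z ∈ s, DifferentiableAt ℝ u z → fderiv ℝ u z v ≤ a)
    {x : E} {t : ℝ} (ht : 0 ≤ t) (hx : x ∈ s) (hxt : x + t • v ∈ s) :
    u (x + t • v) - u x ≤ a * t := by
  borelize E
  let μ : Measure E := Measure.addHaar
  have hae : ∀ᵐ y ∂μ, ∀ᵐ r : ℝ, DifferentiableAt ℝ u (y + r • v) := by
    have hm : MeasurableSet {w : E × ℝ | DifferentiableAt ℝ u (w.1 + w.2 • v)} :=
      (measurableSet_of_differentiableAt ℝ u).preimage
        (show Continuous fun w : E × ℝ => w.1 + w.2 • v by fun_prop).measurable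
    rw [Measure.ae_ae_comm hm]
    refine Eventually.of_forall fun r => ?_
    exact (measurePreserving_add_right μ (r • v)).quasiMeasurePreserving.ae
      hu.ae_differentiableAt
  have hgood : ∀ y, y ∈ s → y + t • v ∈ s → (∀ᵐ r : ℝ, DifferentiableAt ℝ u (y + r • v)) →
      u (y + t • v) - u y ≤ a * t := by
    intro y hy hyt hyd
    let g : ℝ → ℝ := fun r => u (y + r • v)
    have hline : LipschitzWith ‖v‖₊ fun r : ℝ => y + r • v := by
      refine LipschitzWith.of_dist_le_mul fun r r' => ?_
      rw [dist_add_left, dist_eq_norm, ← sub_smul, norm_smul, mul_comm]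
      rfl
    have hac : AbsolutelyContinuousOnInterval g 0 t :=
      (hu.comp hline).lipschitzOnWith.absolutelyContinuousOnInterval
    have hint : ∫ r in (0 : ℝ)..t, deriv g r ≤ ∫ _ in (0 : ℝ)..t, a := by
      refine intervalIntegral.integral_mono_ae_restrict ht hac.intervalIntegrable_deriv
        intervalIntegrable_const ?_
      refine (ae_restrict_iff' measurableSet_Icc).2 ?_
      filter_upwards [hyd] with r hr hrt
      have hmem : y + r • v ∈ s := by
        have hseg := hs.segment_subset hy hyt
        rw [segment_eq_image'] at hseg
        rcases ht.eq_or_lt with rfl | ht0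
        · obtain rfl : r = 0 := le_antisymm hrt.2 hrt.1
          simpa using hy
        · refine hseg ⟨r / t, ⟨by have := hrt.1; positivity, (div_le_one ht0).2 hrt.2⟩, ?_⟩
          simp [smul_smul, div_mul_cancel₀ _ ht0.ne']
      have h1 : HasDerivAt (fun r : ℝ => y + r • v) v r := by
        simpa using ((hasDerivAt_id r).smul_const v).const_add y
      have h2 : HasDerivAt g (fderiv ℝ u (y + r • v) v) r :=
        hr.hasFDerivAt.comp_hasDerivAt r h1
      rw [h2.deriv]
      exact ha _ hmem hr
    rw [hac.integral_deriv_eq_sub] at hint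
    simpa [g, mul_comm] using hint
  have hfreq : ∃ᶠ y in 𝓝 x, u (y + t • v) - u y ≤ a * t := by
    have hd := mem_closure_iff_frequently.1 (Measure.dense_of_ae hae x)
    have hy : ∀ᶠ y in 𝓝 x, y ∈ s := hso.mem_nhds hx
    have hyt : ∀ᶠ y in 𝓝 x, y + t • v ∈ s :=
      (show Continuous fun y : E => y + t • v by fun_prop).continuousAt (hso.mem_nhds hxt)
    exact (hd.and_eventually (hy.and hyt)).mono fun y h => hgood y h.2.1 h.2.2 h.1
  have hcont : Continuous fun y => u (y + t • v) - u y := by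
    have := hu.continuous
    fun_prop
  exact le_of_tendsto_of_frequently hcont.continuousAt hfreq

end Lipschitz

section Clarke

variable {n : ℕ} {u : EuclideanSpace ℝ (Fin n) → ℝ} {K : NNReal}
  {x : EuclideanSpace ℝ (Fin n)}

theorem LipschitzWith.exists_reachableGrad_subseq (hu : LipschitzWith K u)
    {xs : ℕ → EuclideanSpace ℝ (Fin n)} (hd : ∀ m, DifferentiableAt ℝ u (xs m))
    (hxs : Tendsto xs atTop (𝓝 x)) :
    ∃ p ∈ reachableGrad u x, ∃ ψ : ℕ → ℕ, StrictMono ψ ∧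
      Tendsto (fun m => fderiv ℝ u (xs (ψ m))) atTop (𝓝 p) := by
  obtain ⟨p, -, ψ, hψ, hp⟩ := (isCompact_closedBall (0 : EuclideanSpace ℝ (Fin n) →L[ℝ] ℝ)
    (K : ℝ)).tendsto_subseq (x := fun m => fderiv ℝ u (xs m))
    fun m => by simpa using norm_fderiv_le_of_lipschitz ℝ hu
  exact ⟨p, ⟨xs ∘ ψ, fun m => hd _, hxs.comp hψ.tendsto_atTop, hp⟩, ψ, hψ, hp⟩

theorem LipschitzWith.reachableGrad_nonempty (hu : LipschitzWith K u)
    (x : EuclideanSpace ℝ (Fin n)) : (reachableGrad u x).Nonempty := by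
  have hdense : Dense {y | DifferentiableAt ℝ u y} :=
    Measure.dense_of_ae (μ := volume) hu.ae_differentiableAt
  obtain ⟨xs, hd, hxs⟩ := mem_closure_iff_seq_limit.1 (hdense x)
  obtain ⟨p, hp, -⟩ := hu.exists_reachableGrad_subseq hd hxs
  exact ⟨p, hp⟩

theorem reachableGrad_subset_clarkeGrad : reachableGrad u x ⊆ clarkeGrad u x :=
  (subset_convexHull ℝ _).trans subset_closure

theorem clarkeGrad_subset_of_convex_of_isClosed {s : Set (EuclideanSpace ℝ (Fin n) →L[ℝ] ℝ)}
    (hs : Convex ℝ s) (hsc : IsClosed s) (h : reachableGrad u x ⊆ s) : clarkeGrad u x ⊆ s :=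
  closure_minimal (convexHull_min h hs) hsc

theorem LipschitzWith.clarkeGrad_subset_closedBall (hu : LipschitzWith K u) :
    clarkeGrad u x ⊆ closedBall 0 K := by
  refine clarkeGrad_subset_of_convex_of_isClosed (convex_closedBall _ _) isClosed_closedBall ?_
  rintro p ⟨xs, -, -, hp⟩
  exact isClosed_closedBall.mem_of_tendsto hp
    (Eventually.of_forall fun m => by simpa using norm_fderiv_le_of_lipschitz ℝ hu)

theorem LipschitzWith.le_clarkeUpper (hu : LipschitzWith K u)
    {p : EuclideanSpace ℝ (Fin n) →L[ℝ] ℝ} (hp : p ∈ clarkeGrad u x)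
    (v : EuclideanSpace ℝ (Fin n)) : p v ≤ clarkeUpper u x v := by
  refine le_csSup ⟨K * ‖v‖, ?_⟩ (mem_image_of_mem _ hp)
  rintro _ ⟨q, hq, rfl⟩
  have hqK : ‖q‖ ≤ K := by simpa using hu.clarkeGrad_subset_closedBall hq
  exact (le_abs_self _).trans (q.le_of_opNorm_le hqK v)

theorem LipschitzWith.eventually_fderiv_le_of_clarkeUpper_lt (hu : LipschitzWith K u)
    {v : EuclideanSpace ℝ (Fin n)} {a : ℝ} (ha : clarkeUpper u x v < a) :
    ∀ᶠ z in 𝓝 x, DifferentiableAt ℝ u z → fderiv ℝ u z v ≤ a := by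
  by_contra hcon
  have hfreq : ∃ᶠ z in 𝓝 x, DifferentiableAt ℝ u z ∧ a < fderiv ℝ u z v :=
    (not_eventually.1 hcon).mono fun z hz => by simpa using hz
  obtain ⟨xs, hxs, hmem⟩ := exists_seq_forall_of_frequently hfreq
  obtain ⟨p, hp, ψ, -, hlim⟩ := hu.exists_reachableGrad_subseq (fun m => (hmem m).1) hxs
  have hpv : a ≤ p v :=
    ge_of_tendsto (((ContinuousLinearMap.apply ℝ ℝ v).continuous.tendsto p).comp hlim)
      (Eventually.of_forall fun m => (hmem (ψ m)).2.le)
  exact absurd (hpv.trans (hu.le_clarkeUpper (reachableGrad_subset_clarkeGrad hp) v))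
    (not_le.2 ha)

/-- The differential of a function touching `u` from above is dominated by the Clarke gauge. -/
theorem LipschitzWith.fderiv_le_clarkeUpper_of_isLocalMax (hu : LipschitzWith K u)
    {φ : EuclideanSpace ℝ (Fin n) → ℝ} (hφ : DifferentiableAt ℝ φ x)
    (hmax : IsLocalMax (fun y => u y - φ y) x) (v : EuclideanSpace ℝ (Fin n)) :
    fderiv ℝ φ x v ≤ clarkeUpper u x v := by
  refine le_of_forall_gt_imp_ge_of_dense fun a ha => ?_
  obtain ⟨δ, hδ, hball⟩ := Metric.eventually_nhds_iff_ball.1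
    (hu.eventually_fderiv_le_of_clarkeUpper_lt ha)
  have hline : Tendsto (fun t : ℝ => x - t • v) (𝓝[>] 0) (𝓝 x) := by
    have : Continuous fun t : ℝ => x - t • v := by fun_prop
    simpa using (this.tendsto 0).mono_left nhdsWithin_le_nhds
  have hderiv : HasDerivAt (fun t : ℝ => φ (x - t • v)) (-(fderiv ℝ φ x v)) 0 := by
    have h1 : HasDerivAt (fun t : ℝ => x - t • v) (-v) 0 := by
      simpa using ((hasDerivAt_id (0 : ℝ)).smul_const v).const_sub x
    have h2 : HasFDerivAt φ (fderiv ℝ φ x) (x - (0 : ℝ) • v) := by simpa using hφ.hasFDerivAt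
    rw [← map_neg]
    exact h2.comp_hasDerivAt (0 : ℝ) h1
  have hslope : -a ≤ -(fderiv ℝ φ x v) := by
    refine ge_of_tendsto hderiv.tendsto_slope_zero_right ?_
    filter_upwards [self_mem_nhdsWithin, hline (ball_mem_nhds x hδ), hline.eventually hmax]
      with t ht htb htmax
    have ht0 : (0 : ℝ) < t := ht
    have hsub := hu.sub_le_mul_of_forall_fderiv_le (x := x - t • v) (convex_ball x δ) isOpen_ball
      hball ht0.le htb (by rw [sub_add_cancel]; exact mem_ball_self hδ)
    rw [sub_add_cancel] at hsub
    simp only [zero_add, zero_smul, sub_zero, smul_eq_mul]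
    rw [inv_mul_eq_div, le_div_iff₀ ht0]
    linarith
  linarith

end Clarke

/-- A Lipschitz function `u` is a viscosity subsolution of `H(x, d_x u) = c`, for `H`
continuous and convex in the momentum, if and only if `∂⁺u(x,v) ≤ L(x,v) + c` for every
`(x,v)`, where `L` is the fiberwise Fenchel conjugate of `H`. -/
theorem viscSubsol_iff_clarkeUpper_le {n : ℕ}
    (H : EuclideanSpace ℝ (Fin n) → (EuclideanSpace ℝ (Fin n) →L[ℝ] ℝ) → ℝ)
    (hcont : Continuous (Function.uncurry H))
    (hconv : ∀ x, ConvexOn ℝ Set.univ (H x))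
    (L : EuclideanSpace ℝ (Fin n) → EuclideanSpace ℝ (Fin n) → ℝ)
    (hL : ∀ x v, IsLUB {r : ℝ | ∃ p : EuclideanSpace ℝ (Fin n) →L[ℝ] ℝ,
      r = p v - H x p} (L x v))
    (c : ℝ) (u : EuclideanSpace ℝ (Fin n) → ℝ)
    (K : NNReal) (hu : LipschitzWith K u) :
    (∀ x (φ : EuclideanSpace ℝ (Fin n) → ℝ), ContDiff ℝ 1 φ →
        IsLocalMax (fun y => u y - φ y) x → H x (fderiv ℝ φ x) ≤ c) ↔
    (∀ x v, clarkeUpper u x v ≤ L x v + c) := by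
  constructor
  · intro hvisc x v
    have hsub : clarkeGrad u x ⊆ {p | H x p ≤ c} := by
      refine clarkeGrad_subset_of_convex_of_isClosed (by simpa using (hconv x).convex_le c)
        (isClosed_le (hcont.comp (by fun_prop : Continuous fun p => (x, p))) continuous_const) ?_
      rintro p ⟨xs, hd, hxs, hp⟩
      exact le_of_tendsto ((hcont.tendsto (x, p)).comp (hxs.prodMk_nhds hp))
        (Eventually.of_forall fun m =>
          (hd m).le_of_viscosity_subsolution hcont hu.continuous hvisc)
    refine csSup_le (((hu.reachableGrad_nonempty x).mono
      reachableGrad_subset_clarkeGrad).image _) ?_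
    rintro _ ⟨p, hp, rfl⟩
    have hHp : H x p ≤ c := hsub hp
    have hFenchel : p v - H x p ≤ L x v := (hL x v).1 ⟨p, rfl⟩
    show p v ≤ L x v + c
    linarith
  · intro hle x φ hφ hmax
    exact (hconv x).le_of_forall_sub_conjugate_le
      (hcont.comp (by fun_prop : Continuous fun p => (x, p))) (hL x) fun v =>
        (hu.fderiv_le_clarkeUpper_of_isLocalMax (hφ.differentiable one_ne_zero x) hmax v).trans
          (hle x v)
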